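/- arXiv:2201.06501 — 5 statements merged into one kernel-verified Lean document; each statement's English description precedes it below -/
import Mathlib

section
/- For natural numbers i, j, s with 0 ≤ i ≤ j ≤ s-1: the sum ∑_{ℓ=0}^{j-i} (-1)^ℓ · C(s-ℓ, j-ℓ)^{-1} · C(2s-ℓ, j-i-ℓ) · C(i+j+1, ℓ) equals (s-j) · ((s-1-(i+j)/2)! · ((i+j)/2)!) / ((s-(j-i)/2)! · ((j-i)/2)!) when i ≡ j (mod 2), and equals 0 when i ≢ j (mod 2). Here C(a,b) denotes the binomial coefficient. -/
open Nat in
/-- The summand of the identity, up to a factor independent of `ℓ`, with `j = i + n`. -/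
noncomputable def watsonTerm (i s n ℓ : ℕ) : ℝ :=
  (-1) ^ ℓ * ((i + n - ℓ)! * (2 * s - ℓ)!) /
    ((s - ℓ)! * (n - ℓ)! * ℓ ! * (2 * i + n + 1 - ℓ)!)

theorem watsonTerm_succ (i s n ℓ : ℕ) (hs : i + n + 1 ≤ s) (hℓ : ℓ < n) :
    ((i : ℝ) + n - ℓ) * (2 * s - ℓ) * (ℓ + 1) * watsonTerm i s n (ℓ + 1) =
      -((s - ℓ) * (n - ℓ) * (2 * i + n + 1 - ℓ)) * watsonTerm i s n ℓ := by
  obtain ⟨m, rfl⟩ : ∃ m, n = ℓ + 1 + m := ⟨n - ℓ - 1, by omega⟩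
  obtain ⟨d, rfl⟩ : ∃ d, s = i + (ℓ + 1 + m) + 1 + d := ⟨s - (i + (ℓ + 1 + m) + 1), by omega⟩
  unfold watsonTerm
  rw [show i + (ℓ + 1 + m) - (ℓ + 1) = i + m by omega,
    show i + (ℓ + 1 + m) - ℓ = i + m + 1 by omega,
    show 2 * (i + (ℓ + 1 + m) + 1 + d) - (ℓ + 1) = 2 * i + ℓ + 2 * m + 2 * d + 3 by omega,
    show 2 * (i + (ℓ + 1 + m) + 1 + d) - ℓ = 2 * i + ℓ + 2 * m + 2 * d + 3 + 1 by omega,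
    show i + (ℓ + 1 + m) + 1 + d - (ℓ + 1) = i + m + d + 1 by omega,
    show i + (ℓ + 1 + m) + 1 + d - ℓ = i + m + d + 1 + 1 by omega,
    show ℓ + 1 + m - (ℓ + 1) = m by omega,
    show ℓ + 1 + m - ℓ = m + 1 by omega,
    show 2 * i + (ℓ + 1 + m) + 1 - (ℓ + 1) = 2 * i + m + 1 by omega,
    show 2 * i + (ℓ + 1 + m) + 1 - ℓ = 2 * i + m + 1 + 1 by omega,
    Nat.factorial_succ (i + m), Nat.factorial_succ (2 * i + ℓ + 2 * m + 2 * d + 3),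
    Nat.factorial_succ (i + m + d + 1), Nat.factorial_succ m,
    Nat.factorial_succ (2 * i + m + 1), Nat.factorial_succ ℓ]
  push_cast
  field_simp
  ring

theorem watsonTerm_shift (i s n ℓ : ℕ) (hℓ : ℓ ≤ n) :
    ((i : ℝ) + (n + 2) - ℓ) * watsonTerm (i + 1) s n ℓ =
      (n + 2 - ℓ) * (n + 1 - ℓ) * watsonTerm i s (n + 2) ℓ := by
  obtain ⟨m, rfl⟩ : ∃ m, n = ℓ + m := ⟨n - ℓ, by omega⟩
  unfold watsonTerm
  rw [show i + 1 + (ℓ + m) - ℓ = i + m + 1 by omega,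
    show i + (ℓ + m + 2) - ℓ = i + m + 1 + 1 by omega,
    show ℓ + m - ℓ = m by omega,
    show ℓ + m + 2 - ℓ = m + 1 + 1 by omega,
    show 2 * (i + 1) + (ℓ + m) + 1 - ℓ = 2 * i + m + 3 by omega,
    show 2 * i + (ℓ + m + 2) + 1 - ℓ = 2 * i + m + 3 by omega,
    Nat.factorial_succ (i + m + 1), Nat.factorial_succ (m + 1), Nat.factorial_succ m]
  push_cast
  field_simp
  ring

theorem watsonTerm_telescope (i s n ℓ : ℕ) (hs : i + n + 3 ≤ s) (hℓ : ℓ ≤ n) :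
    ((s : ℝ) - (i + n + 2)) * watsonTerm (i + 1) s n ℓ
        - (n + 2) * (2 * s - 1 - n) * watsonTerm i s (n + 2) ℓ =
      (ℓ + 1) * (2 * s - ℓ) * watsonTerm i s (n + 2) (ℓ + 1)
        - ℓ * (2 * s + 1 - ℓ) * watsonTerm i s (n + 2) ℓ := by
  have h₁ := watsonTerm_succ i s (n + 2) ℓ (by omega) (by omega)
  have h₂ := watsonTerm_shift i s n ℓ hℓ
  have hpos : (i : ℝ) + (n + 2) - ℓ ≠ 0 := by
    have : (ℓ : ℝ) ≤ n := by exact_mod_cast hℓ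
    have : (0 : ℝ) ≤ i := by positivity
    linarith
  apply mul_left_cancel₀ hpos
  push_cast at h₁
  linear_combination ((s : ℝ) - (i + n + 2)) * h₂ - h₁

theorem sum_watsonTerm_partial (i s n L : ℕ) (hs : i + n + 3 ≤ s) (hL : L ≤ n + 1) :
    ((s : ℝ) - (i + n + 2)) * ∑ ℓ ∈ Finset.range L, watsonTerm (i + 1) s n ℓ
        - (n + 2) * (2 * s - 1 - n) * ∑ ℓ ∈ Finset.range L, watsonTerm i s (n + 2) ℓ =
      L * (2 * s + 1 - L) * watsonTerm i s (n + 2) L := by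
  induction L with
  | zero => simp
  | succ L ih =>
    have h := watsonTerm_telescope i s n L hs (by omega)
    have ih := ih (by omega)
    rw [Finset.sum_range_succ, Finset.sum_range_succ]
    push_cast
    linear_combination ih + h

theorem sum_watsonTerm_step (i s n : ℕ) (hs : i + n + 3 ≤ s) :
    (n + 2) * (2 * s - 1 - n) * ∑ ℓ ∈ Finset.range (n + 3), watsonTerm i s (n + 2) ℓ =
      ((s : ℝ) - (i + n + 2)) * ∑ ℓ ∈ Finset.range (n + 1), watsonTerm (i + 1) s n ℓ := by
  have h₁ := sum_watsonTerm_partial i s n (n + 1) hs le_rfl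
  have h₂ := watsonTerm_succ i s (n + 2) (n + 1) (by omega) (by omega)
  have hpos : (i : ℝ) + 1 ≠ 0 := by positivity
  have h₃ : (2 * s - (n + 1)) * ((n : ℝ) + 2) * watsonTerm i s (n + 2) (n + 2) =
      -((s - (n + 1)) * 2) * watsonTerm i s (n + 2) (n + 1) := by
    apply mul_left_cancel₀ hpos
    push_cast at h₂
    linear_combination h₂
  rw [Finset.sum_range_succ _ (n + 2), Finset.sum_range_succ _ (n + 1)]
  push_cast at h₁
  linear_combination -h₁ + h₃

open Nat in
theorem sum_watsonTerm_even (i s m : ℕ) (hs : i + 2 * m + 1 ≤ s) :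
    ∑ ℓ ∈ Finset.range (2 * m + 1), watsonTerm i s (2 * m) ℓ =
      ((2 * s - 2 * m)! * (s - 1 - (i + m))! * (i + m)! : ℝ) /
        ((2 * i + 2 * m + 1)! * (s - (i + 2 * m) - 1)! * (s - m)! * m !) := by
  induction m generalizing i with
  | zero =>
    simp only [watsonTerm, Nat.mul_zero, zero_add, Finset.sum_range_one]
    rw [show s - 1 - (i + 0) = s - (i + 0) - 1 by omega]
    simp only [Nat.add_zero, Nat.sub_zero, pow_zero, Nat.factorial_zero]
    push_cast
    field_simp
  | succ m ih =>
    have h := sum_watsonTerm_step i s (2 * m) (by omega)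
    rw [ih (i + 1) (by omega)] at h
    obtain ⟨d, rfl⟩ : ∃ d, s = i + 2 * m + 3 + d := ⟨s - (i + 2 * m + 3), by omega⟩
    have hpos : ((2 * m : ℕ) + 2 : ℝ) * (2 * (i + 2 * m + 3 + d : ℕ) - 1 - (2 * m : ℕ)) ≠ 0 := by
      push_cast
      have : (0 : ℝ) < 2 * (i + 2 * m + 3 + d) - 1 - 2 * m := by
        have : (0 : ℝ) ≤ i := by positivity
        have : (0 : ℝ) ≤ m := by positivity
        have : (0 : ℝ) ≤ d := by positivity
        linarith
      positivity
    apply mul_left_cancel₀ hpos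
    rw [show 2 * (m + 1) + 1 = 2 * m + 3 by ring, show 2 * (m + 1) = 2 * m + 2 by ring, h,
      show 2 * (i + 2 * m + 3 + d) - 2 * m = 2 * i + 2 * m + 4 + 2 * d + 1 + 1 by omega,
      show 2 * (i + 2 * m + 3 + d) - (2 * m + 2) = 2 * i + 2 * m + 4 + 2 * d by omega,
      show i + 2 * m + 3 + d - 1 - (i + 1 + m) = m + 1 + d by omega,
      show i + 2 * m + 3 + d - 1 - (i + (m + 1)) = m + 1 + d by omega,
      show i + 1 + m = i + (m + 1) by omega,
      show 2 * (i + 1) + 2 * m + 1 = 2 * i + (2 * m + 2) + 1 by omega,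
      show i + 2 * m + 3 + d - (i + 1 + 2 * m) - 1 = d + 1 by omega,
      show i + 2 * m + 3 + d - (i + (2 * m + 2)) - 1 = d by omega,
      show i + 2 * m + 3 + d - m = i + m + 2 + d + 1 by omega,
      show i + 2 * m + 3 + d - (m + 1) = i + m + 2 + d by omega,
      Nat.factorial_succ (2 * i + 2 * m + 4 + 2 * d + 1),
      Nat.factorial_succ (2 * i + 2 * m + 4 + 2 * d), Nat.factorial_succ d,
      Nat.factorial_succ (i + m + 2 + d), Nat.factorial_succ m]
    push_cast
    field_simp
    ring

theorem sum_watsonTerm_odd (i s m : ℕ) (hs : i + (2 * m + 1) + 1 ≤ s) :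
    ∑ ℓ ∈ Finset.range (2 * m + 1 + 1), watsonTerm i s (2 * m + 1) ℓ = 0 := by
  induction m generalizing i with
  | zero =>
    have h := watsonTerm_succ i s 1 0 (by omega) (by omega)
    have hpos : 2 * ((i : ℝ) + 1) * s ≠ 0 := by
      have : (0 : ℝ) < s := by exact_mod_cast (by omega : 0 < s)
      positivity
    simp only [Nat.mul_zero, zero_add, Finset.sum_range_succ, Finset.sum_range_zero]
    apply mul_left_cancel₀ hpos
    push_cast at h
    linear_combination h
  | succ m ih =>
    have h := sum_watsonTerm_step i s (2 * m + 1) (by omega)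
    rw [ih (i + 1) (by omega), mul_zero] at h
    refine (mul_eq_zero.mp h).resolve_left (mul_ne_zero (by positivity) ?_)
    have : ((i + (2 * (m + 1) + 1) + 1 : ℕ) : ℝ) ≤ s := by exact_mod_cast hs
    push_cast at this ⊢
    have : (0 : ℝ) ≤ i := by positivity
    have : (0 : ℝ) ≤ m := by positivity
    intro h0
    linarith

open Nat in
theorem choose_summand_eq_watsonTerm (i s n ℓ : ℕ) (hs : i + n + 1 ≤ s) (hℓ : ℓ ≤ n) :
    (-1 : ℝ) ^ ℓ * ((s - ℓ).choose (i + n - ℓ) : ℝ)⁻¹ *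
        ((2 * s - ℓ).choose (n - ℓ) : ℝ) * ((2 * i + n + 1).choose ℓ : ℝ) =
      ((s - (i + n))! * (2 * i + n + 1)! / (2 * s - n)! : ℝ) * watsonTerm i s n ℓ := by
  rw [Nat.cast_choose ℝ (show i + n - ℓ ≤ s - ℓ by omega),
    Nat.cast_choose ℝ (show n - ℓ ≤ 2 * s - ℓ by omega),
    Nat.cast_choose ℝ (show ℓ ≤ 2 * i + n + 1 by omega),
    show s - ℓ - (i + n - ℓ) = s - (i + n) by omega,
    show 2 * s - ℓ - (n - ℓ) = 2 * s - n by omega, watsonTerm]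
  field_simp

/-- The combinatorial identity of Lemma 3.3: for `0 ≤ i ≤ j ≤ s-1`,
`∑_{ℓ=0}^{j-i} (-1)^ℓ C(s-ℓ, j-ℓ)⁻¹ C(2s-ℓ, j-i-ℓ) C(i+j+1, ℓ)` equals
`(s-j) (s-1-(i+j)/2)! ((i+j)/2)! / ((s-(j-i)/2)! ((j-i)/2)!)` if `i ≡ j (mod 2)`,
and `0` otherwise. -/
theorem combinatorial_identity (i j s : ℕ) (hs : 1 ≤ s) (hij : i ≤ j) (hj : j ≤ s - 1) :
    ∑ ℓ ∈ Finset.range (j - i + 1),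
        (-1 : ℝ) ^ ℓ * ((Nat.choose (s - ℓ) (j - ℓ) : ℝ))⁻¹ *
          (Nat.choose (2 * s - ℓ) (j - i - ℓ) : ℝ) * (Nat.choose (i + j + 1) ℓ : ℝ) =
      if i % 2 = j % 2 then
        ((s : ℝ) - (j : ℝ)) *
          ((Nat.factorial (s - 1 - (i + j) / 2) : ℝ) * (Nat.factorial ((i + j) / 2) : ℝ)) /
            ((Nat.factorial (s - (j - i) / 2) : ℝ) * (Nat.factorial ((j - i) / 2) : ℝ))
      else 0 := by
  obtain ⟨n, rfl⟩ : ∃ n, j = i + n := ⟨j - i, by omega⟩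
  have hsn : i + n + 1 ≤ s := by omega
  rw [show i + n - i = n by omega, show i + (i + n) = 2 * i + n by ring,
    Finset.sum_congr rfl fun ℓ hℓ => choose_summand_eq_watsonTerm i s n ℓ hsn
      (by simpa [Nat.lt_succ_iff] using hℓ), ← Finset.mul_sum]
  obtain ⟨m, rfl | rfl⟩ := n.even_or_odd'
  · rw [if_pos (by omega), sum_watsonTerm_even i s m hsn,
      show (2 * i + 2 * m) / 2 = i + m by omega, show 2 * m / 2 = m by omega]
    obtain ⟨d, rfl⟩ : ∃ d, s = i + 2 * m + 1 + d := ⟨s - (i + 2 * m + 1), by omega⟩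
    rw [show i + 2 * m + 1 + d - (i + 2 * m) = d + 1 by omega, Nat.add_sub_cancel,
      Nat.factorial_succ d]
    push_cast
    field_simp
    ring
  · rw [if_neg (by omega), sum_watsonTerm_odd i s m hsn, mul_zero]
end

section
/- Fix p, q ∈ ℤ⁺ and s ∈ ℝ with 2s ∉ ℤ. Define φ_n(s;p,q) = [(s+3/2-p)_n (1-p)_n (s+1/2-q)_n (-q)_n] / [(p-s+1)_n (p+3/2)_n (q-s+1)_n (q+3/2)_n] and Φ_n(s;p,q) = [(n+p-s)(1+2p+2n)(n+q-s)(1+2q+2n) / ((s-p)(1+2p)(s-q)(1+2q))] · φ_n(s;p,q), and φ̃_n(s;p,q) = φ_n(s;p,q) · [C¹ + C²]/((s-p)(1+2p)(s-q)(1+2q)) where C¹ = (4n+3)(1+s-2p)(q-n)(1+2s+2n-2q) and C² = (4n+1)(s-2q)(1+2p+2n)(s-p-n). Then: (a) Φ_0 = 1; (b) Φ_n = 0 for all n ≥ p; (c) Φ_{n+1} - Φ_n = -φ̃_n for all n ∈ ℕ. -/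
/-- The rising factorial (Pochhammer symbol) `(x)_n = x (x+1) ⋯ (x+n-1)`. -/
noncomputable def risingFactorial (x : ℝ) (n : ℕ) : ℝ :=
  ∏ k ∈ Finset.range n, (x + k)

/-- `φ_n(s;p,q)`. -/
noncomputable def varphi (s : ℝ) (p q : ℕ) (n : ℕ) : ℝ :=
  (risingFactorial (s + 3 / 2 - p) n * risingFactorial (1 - p) n *
      risingFactorial (s + 1 / 2 - q) n * risingFactorial (-q) n) /
    (risingFactorial ((p : ℝ) - s + 1) n * risingFactorial ((p : ℝ) + 3 / 2) n *
      risingFactorial ((q : ℝ) - s + 1) n * risingFactorial ((q : ℝ) + 3 / 2) n)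

/-- `Φ_n(s;p,q)`. -/
noncomputable def Phi (s : ℝ) (p q : ℕ) (n : ℕ) : ℝ :=
  (((n : ℝ) + p - s) * (1 + 2 * p + 2 * n) * ((n : ℝ) + q - s) * (1 + 2 * q + 2 * n) /
      ((s - p) * (1 + 2 * p) * (s - q) * (1 + 2 * q))) * varphi s p q n

/-- `φ̃_n(s;p,q)` (denoted `ϕ_n` in the paper). -/
noncomputable def phiT (s : ℝ) (p q : ℕ) (n : ℕ) : ℝ :=
  varphi s p q n *
    ((4 * (n : ℝ) + 3) * (1 + s - 2 * p) * ((q : ℝ) - n) * (1 + 2 * s + 2 * n - 2 * q) +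
      (4 * (n : ℝ) + 1) * (s - 2 * q) * (1 + 2 * p + 2 * n) * (s - p - n)) /
    ((s - p) * (1 + 2 * p) * (s - q) * (1 + 2 * q))

theorem risingFactorial_zero (x : ℝ) : risingFactorial x 0 = 1 := by
  simp [risingFactorial]

theorem risingFactorial_succ (x : ℝ) (n : ℕ) :
    risingFactorial x (n + 1) = risingFactorial x n * (x + n) := by
  simp [risingFactorial, Finset.prod_range_succ]

theorem risingFactorial_one_sub_natCast_eq_zero {p n : ℕ} (hp : 0 < p) (hpn : p ≤ n) :
    risingFactorial (1 - p) n = 0 :=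
  Finset.prod_eq_zero (Finset.mem_range.2 (by omega : p - 1 < n)) (by
    rw [Nat.cast_sub hp]
    push_cast
    ring)

theorem varphi_zero (s : ℝ) (p q : ℕ) : varphi s p q 0 = 1 := by
  simp [varphi, risingFactorial_zero]

theorem varphi_succ (s : ℝ) (p q n : ℕ) :
    varphi s p q (n + 1) = varphi s p q n *
      (((s + 3 / 2 - p + n) * (1 - p + n) * (s + 1 / 2 - q + n) * (-q + n)) /
        ((p - s + 1 + n) * (p + 3 / 2 + n) * (q - s + 1 + n) * (q + 3 / 2 + n))) := by
  simp only [varphi, risingFactorial_succ]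
  rw [div_mul_div_comm]
  congr 1 <;> ring

/-- Telescoping lemma: `Φ_0 = 1`, `Φ_n = 0` for `n ≥ p`, and `Φ_{n+1} - Φ_n = -φ̃_n`. -/
theorem Phi_telescoping (p q : ℕ) (hp : 0 < p) (hq : 0 < q)
    (s : ℝ) (hs : ∀ m : ℤ, 2 * s ≠ (m : ℝ)) :
    Phi s p q 0 = 1 ∧ (∀ n : ℕ, p ≤ n → Phi s p q n = 0) ∧
      (∀ n : ℕ, Phi s p q (n + 1) - Phi s p q n = -phiT s p q n) := by
  have sub_ne (a : ℕ) : s - a ≠ 0 := fun h => hs (2 * a) (by push_cast; linarith)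
  have hsp := sub_ne p
  have hsq := sub_ne q
  have hp' : (1 + 2 * p : ℝ) ≠ 0 := by positivity
  have hq' : (1 + 2 * q : ℝ) ≠ 0 := by positivity
  refine ⟨?_, fun n hn => ?_, fun n => ?_⟩
  · rw [Phi, varphi_zero, mul_one, div_eq_one_iff_eq (by positivity)]
    push_cast
    ring
  · simp [Phi, varphi, risingFactorial_one_sub_natCast_eq_zero hp hn]
  · have shift_ne (a : ℕ) : (a : ℝ) - s + 1 + n ≠ 0 := fun h =>
      sub_ne (a + 1 + n) (by push_cast; linarith)
    have h₁ := shift_ne p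
    have h₂ := shift_ne q
    have h₃ : (p + 3 / 2 + n : ℝ) ≠ 0 := by positivity
    have h₄ : (q + 3 / 2 + n : ℝ) ≠ 0 := by positivity
    have numerator_cancel :
        (((n + 1 : ℕ) : ℝ) + p - s) * (1 + 2 * p + 2 * (n + 1 : ℕ)) *
            (((n + 1 : ℕ) : ℝ) + q - s) * (1 + 2 * q + 2 * (n + 1 : ℕ)) *
          (((s + 3 / 2 - p + n) * (1 - p + n) * (s + 1 / 2 - q + n) * (-q + n)) /
            ((p - s + 1 + n) * (p + 3 / 2 + n) * (q - s + 1 + n) * (q + 3 / 2 + n))) =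
        4 * ((s + 3 / 2 - p + n) * (1 - p + n) * (s + 1 / 2 - q + n) * (-q + n)) := by
      rw [mul_div_assoc', div_eq_iff (by positivity)]
      push_cast
      ring
    rw [Phi, Phi, phiT, varphi_succ, div_mul_eq_mul_div, div_mul_eq_mul_div, ← sub_div,
      ← neg_div, mul_left_comm, numerator_cancel]
    congr 1
    ring
end

section
/- Let s ∈ ℝ with 2s ∉ ℤ, and define θ_i^{(s)} and ν_{i,j}^{(s)} as in the Padé Cholesky analysis (θ_0^{(s)}=1, θ_i^{(s)} = (1/i!)∏_{k=0}^{i-1}(s-k)/(2s-k); ν_{i,j}^{(s)} given by the explicit Pochhammer formulas, with ν_{i,j}^{(s)} = 0 when i > j or i ≢ j mod 2). Then for all positive integers p, q with p ≡ q+1 (mod 2): ∑_{i=1}^{max(p,q)+1} ν_{i,p}^{(s)} ν_{i,q+1}^{(s)} + ∑_{i=1}^{max(p,q)+1} ν_{i,p+1}^{(s)} ν_{i,q}^{(s)} = 2 θ_p^{(s)} θ_q^{(s)}. -/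
/-- `θ_i^{(s)} = (1/i!) ∏_{k=0}^{i-1} (s-k)/(2s-k)`, with `θ_0^{(s)} = 1`. -/
noncomputable def theta (s : ℝ) (i : ℕ) : ℝ :=
  (1 / (Nat.factorial i : ℝ)) * ∏ k ∈ Finset.range i, (s - k) / (2 * s - k)

/-- `ν_{2i,2j}^{(s)} = 2√(4i-1) (s+1/2-j)_i (-j)_i / ((j-s)_i (1/2+j)_i) θ_{2j}^{(s)}`. -/
noncomputable def nuEven (s : ℝ) (i j : ℕ) : ℝ :=
  2 * Real.sqrt (4 * (i : ℝ) - 1) *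
    (risingFactorial (s + 1 / 2 - j) i * risingFactorial (-(j : ℝ)) i /
      (risingFactorial ((j : ℝ) - s) i * risingFactorial (1 / 2 + j) i)) *
    theta s (2 * j)

/-- `ν_{2i-1,2j-1}^{(s)} = 2√(4i-3) (s+3/2-j)_{i-1} (1-j)_{i-1} / ((j-s)_{i-1} (1/2+j)_{i-1}) θ_{2j-1}^{(s)}`. -/
noncomputable def nuOdd (s : ℝ) (i j : ℕ) : ℝ :=
  2 * Real.sqrt (4 * (i : ℝ) - 3) *
    (risingFactorial (s + 3 / 2 - j) (i - 1) * risingFactorial (1 - (j : ℝ)) (i - 1) /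
      (risingFactorial ((j : ℝ) - s) (i - 1) * risingFactorial (1 / 2 + j) (i - 1))) *
    theta s (2 * j - 1)


/-- General `ν_{i,j}^{(s)}`: given by the Pochhammer formulas when `i ≤ j` and
`i ≡ j (mod 2)`, and `0` otherwise. -/
noncomputable def nu (s : ℝ) (i j : ℕ) : ℝ :=
  if i ≤ j ∧ i % 2 = j % 2 then
    (if i % 2 = 0 then nuEven s (i / 2) (j / 2) else nuOdd s ((i + 1) / 2) ((j + 1) / 2))
  else 0

theorem risingFactorial_succ_left (x : ℝ) (n : ℕ) :
    risingFactorial x (n + 1) = x * risingFactorial (x + 1) n := by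
  simp only [risingFactorial]
  rw [Finset.prod_range_succ', mul_comm]
  congr 1
  · simp
  · refine Finset.prod_congr rfl fun k _ => ?_
    push_cast
    ring

theorem risingFactorial_ne_zero {x : ℝ} (hx : ∀ k : ℕ, x + k ≠ 0) (n : ℕ) :
    risingFactorial x n ≠ 0 :=
  Finset.prod_ne_zero_iff.mpr fun k _ => hx k

theorem risingFactorial_neg_natCast_eq_zero {a n : ℕ} (h : a < n) :
    risingFactorial (-(a : ℝ)) n = 0 :=
  Finset.prod_eq_zero (Finset.mem_range.mpr h) (by simp)

theorem theta_succ (s : ℝ) (i : ℕ) :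
    theta s (i + 1) = theta s i * ((s - i) / ((i + 1) * (2 * s - i))) := by
  simp only [theta]
  rw [Finset.prod_range_succ, Nat.factorial_succ]
  push_cast
  simp only [div_eq_mul_inv, mul_inv, one_mul]
  ring

theorem nu_eq_zero_of_lt (s : ℝ) {i j : ℕ} (h : j < i) : nu s i j = 0 :=
  if_neg fun hij => by omega

theorem nu_eq_zero_of_mod_ne (s : ℝ) {i j : ℕ} (h : i % 2 ≠ j % 2) : nu s i j = 0 :=
  if_neg fun hij => h hij.2

theorem nu_odd_odd (s : ℝ) (n a : ℕ) :
    nu s (2 * n + 1) (2 * a + 1) = nuOdd s (n + 1) (a + 1) := by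
  by_cases h : n ≤ a
  · rw [nu, if_pos (by omega), if_neg (by omega)]
    congr 1 <;> omega
  · rw [nu_eq_zero_of_lt s (by omega)]
    simp [nuOdd, risingFactorial_neg_natCast_eq_zero (not_le.mp h)]

theorem nu_even_even (s : ℝ) (n a : ℕ) :
    nu s (2 * n) (2 * a) = nuEven s n a := by
  by_cases h : n ≤ a
  · rw [nu, if_pos (by omega), if_pos (by omega)]
    congr 1 <;> omega
  · rw [nu_eq_zero_of_lt s (by omega)]
    simp [nuEven, risingFactorial_neg_natCast_eq_zero (not_le.mp h)]

/-- The hypergeometric term whose differences are the summands of the identity for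
`p = 2a + 1`, `q = 2b`. -/
noncomputable def telescopingTerm (s : ℝ) (a b n : ℕ) : ℝ :=
  (risingFactorial (s + 1 / 2 - a) n * risingFactorial (-(a : ℝ)) n *
      (risingFactorial (s + 1 / 2 - b) n * risingFactorial (-(b : ℝ)) n)) /
    (risingFactorial ((a : ℝ) + 1 - s) n * risingFactorial (3 / 2 + (a : ℝ)) n *
      (risingFactorial ((b : ℝ) - s) n * risingFactorial (1 / 2 + (b : ℝ)) n))

theorem telescoping_certificate {s a b n : ℝ} (ha : a + 1 - s + n ≠ 0) (ha' : 3 / 2 + a + n ≠ 0)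
    (hb : b - s + n ≠ 0) (hb' : 1 / 2 + b + n ≠ 0) :
    (4 * n + 1) * (-(s - 2 * b)) / ((b - s + n) * (1 / 2 + b + n)) +
      (4 * n + 3) * (-(s - (2 * a + 1))) * ((s + 1 / 2 - b + n) * (-b + n)) /
        ((a + 1 - s + n) * (3 / 2 + a + n) * ((b - s + n) * (1 / 2 + b + n))) =
      2 * (1 - (s + 1 / 2 - a + n) * (-a + n) * ((s + 1 / 2 - b + n) * (-b + n)) /
        ((a + 1 - s + n) * (3 / 2 + a + n) * ((b - s + n) * (1 / 2 + b + n)))) := by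
  generalize hA : a + 1 - s + n = A at *
  generalize hA' : 3 / 2 + a + n = A' at *
  generalize hB : b - s + n = B at *
  generalize hB' : 1 / 2 + b + n = B' at *
  field_simp
  subst hA hA' hB hB'
  ring

set_option maxHeartbeats 800000 in
theorem nuOdd_mul_add_nuEven_mul (s : ℝ) (hs : ∀ m : ℤ, 2 * s ≠ (m : ℝ)) (a b n : ℕ) :
    nuOdd s (n + 1) (a + 1) * nuOdd s (n + 1) (b + 1) +
        nuEven s (n + 1) (a + 1) * nuEven s (n + 1) b =
      2 * theta s (2 * a + 1) * theta s (2 * b) *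
        (telescopingTerm s a b n - telescopingTerm s a b (n + 1)) := by
  have hns : ∀ m : ℤ, (m : ℝ) - s ≠ 0 := fun m h => hs (2 * m) (by push_cast; linarith)
  have ha : ∀ k : ℕ, (a : ℝ) + 1 - s + k ≠ 0 := fun k h =>
    hns (a + 1 + k) (by push_cast; linarith)
  have hb : ∀ k : ℕ, (b : ℝ) - s + k ≠ 0 := fun k h =>
    hns (b + k) (by push_cast; linarith)
  have ha' : ∀ k : ℕ, 3 / 2 + (a : ℝ) + k ≠ 0 := fun k => by positivity
  have hb' : ∀ k : ℕ, 1 / 2 + (b : ℝ) + k ≠ 0 := fun k => by positivity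
  have hsa : 2 * s - (2 * a + 1) ≠ 0 := fun h => hs (2 * a + 1) (by push_cast; linarith)
  have hb0 : (b : ℝ) - s ≠ 0 := by simpa using hb 0
  have hsb : 2 * s - 2 * b ≠ 0 := fun h => hb0 (by linarith)
  have hD₁ := risingFactorial_ne_zero ha n
  have hD₂ := risingFactorial_ne_zero ha' n
  have hD₃ := risingFactorial_ne_zero hb n
  have hD₄ := risingFactorial_ne_zero hb' n
  have hθa : theta s (2 * (a + 1)) =
      theta s (2 * a + 1) * ((s - (2 * a + 1)) / ((2 * a + 2) * (2 * s - (2 * a + 1)))) := by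
    rw [show 2 * (a + 1) = 2 * a + 1 + 1 by ring, theta_succ]
    push_cast
    ring
  have hθb : theta s (2 * b + 1) =
      theta s (2 * b) * ((s - 2 * b) / ((2 * b + 1) * (2 * s - 2 * b))) := by
    rw [theta_succ]
    push_cast
    ring
  have hshift₁ : risingFactorial ((b : ℝ) + 1 - s) n =
      risingFactorial ((b : ℝ) - s) n * ((b : ℝ) - s + n) / ((b : ℝ) - s) := by
    rw [eq_div_iff hb0, ← risingFactorial_succ, risingFactorial_succ_left, mul_comm]
    ring_nf
  have hshift₂ : risingFactorial (3 / 2 + (b : ℝ)) n =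
      risingFactorial (1 / 2 + (b : ℝ)) n * (1 / 2 + (b : ℝ) + n) / (1 / 2 + (b : ℝ)) := by
    rw [eq_div_iff (by positivity), ← risingFactorial_succ, risingFactorial_succ_left, mul_comm]
    ring_nf
  have hOdd : ∀ c : ℕ, nuOdd s (n + 1) (c + 1) = 2 * √(4 * n + 1) *
      (risingFactorial (s + 1 / 2 - c) n * risingFactorial (-(c : ℝ)) n /
        (risingFactorial ((c : ℝ) + 1 - s) n * risingFactorial (3 / 2 + (c : ℝ)) n)) *
      theta s (2 * c + 1) := fun c => by
    simp only [nuOdd, Nat.add_sub_cancel]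
    push_cast
    rw [show 2 * (c + 1) - 1 = 2 * c + 1 by omega,
      show 4 * ((n : ℝ) + 1) - 3 = 4 * n + 1 by ring,
      show s + 3 / 2 - ((c : ℝ) + 1) = s + 1 / 2 - c by ring,
      show 1 - ((c : ℝ) + 1) = -c by ring,
      show 1 / 2 + ((c : ℝ) + 1) = 3 / 2 + c by ring]
  have hEvenA : nuEven s (n + 1) (a + 1) = 2 * √(4 * n + 3) *
      ((s - 1 / 2 - a) * (-(a : ℝ) - 1) *
        (risingFactorial (s + 1 / 2 - a) n * risingFactorial (-(a : ℝ)) n) /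
        (risingFactorial ((a : ℝ) + 1 - s) n * ((a : ℝ) + 1 - s + n) *
          (risingFactorial (3 / 2 + (a : ℝ)) n * (3 / 2 + (a : ℝ) + n)))) *
      theta s (2 * (a + 1)) := by
    simp only [nuEven]
    rw [risingFactorial_succ_left (s + 1 / 2 - _), risingFactorial_succ_left (-_),
      risingFactorial_succ, risingFactorial_succ]
    push_cast
    rw [show 4 * ((n : ℝ) + 1) - 1 = 4 * n + 3 by ring,
      show s + 1 / 2 - ((a : ℝ) + 1) + 1 = s + 1 / 2 - a by ring,
      show -((a : ℝ) + 1) + 1 = -a by ring,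
      show 1 / 2 + ((a : ℝ) + 1) = 3 / 2 + a by ring]
    ring
  have hEvenB : nuEven s (n + 1) b = 2 * √(4 * n + 3) *
      (risingFactorial (s + 1 / 2 - b) n * (s + 1 / 2 - b + n) *
          (risingFactorial (-(b : ℝ)) n * (-(b : ℝ) + n)) /
        (risingFactorial ((b : ℝ) - s) n * ((b : ℝ) - s + n) *
          (risingFactorial (1 / 2 + (b : ℝ)) n * (1 / 2 + (b : ℝ) + n)))) *
      theta s (2 * b) := by
    simp only [nuEven, risingFactorial_succ]
    push_cast
    rw [show 4 * ((n : ℝ) + 1) - 1 = 4 * n + 3 by ring]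
  have hsq₁ : √(4 * (n : ℝ) + 1) ^ 2 = 4 * n + 1 := Real.sq_sqrt (by positivity)
  have hsq₃ : √(4 * (n : ℝ) + 3) ^ 2 = 4 * n + 3 := Real.sq_sqrt (by positivity)
  rw [hOdd, hOdd, hEvenA, hEvenB, hθa, hθb, hshift₁, hshift₂]
  simp only [telescopingTerm, risingFactorial_succ]
  have han := ha n
  have han' := ha' n
  have hbn := hb n
  have hbn' := hb' n
  have hb0' : 1 / 2 + (b : ℝ) ≠ 0 := by positivity
  generalize risingFactorial ((a : ℝ) + 1 - s) n = D₁ at *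
  generalize risingFactorial (3 / 2 + (a : ℝ)) n = D₂ at *
  generalize risingFactorial ((b : ℝ) - s) n = D₃ at *
  generalize risingFactorial (1 / 2 + (b : ℝ)) n = D₄ at *
  generalize risingFactorial (s + 1 / 2 - a) n = X₁
  generalize risingFactorial (-(a : ℝ)) n = X₂
  generalize risingFactorial (s + 1 / 2 - b) n = Y₁
  generalize risingFactorial (-(b : ℝ)) n = Y₂
  generalize theta s (2 * a + 1) = t
  generalize theta s (2 * b) = u
  generalize √(4 * (n : ℝ) + 1) = r₁ at *
  generalize √(4 * (n : ℝ) + 3) = r₃ at *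
  have hcoefB : (s - 2 * b) / ((2 * b + 1) * (2 * s - 2 * b)) * (((b : ℝ) - s) * (1 / 2 + b)) =
      -(s - 2 * b) / 4 := by
    rw [show (2 * (b : ℝ) + 1) * (2 * s - 2 * b) = -4 * (((b : ℝ) - s) * (1 / 2 + b)) by ring]
    have h : ((b : ℝ) - s) * (1 / 2 + b) ≠ 0 := mul_ne_zero hb0 hb0'
    generalize ((b : ℝ) - s) * (1 / 2 + b) = E at *
    field_simp
  have hcoefA : (s - (2 * a + 1)) / ((2 * a + 2) * (2 * s - (2 * a + 1))) *
      ((s - 1 / 2 - a) * (-(a : ℝ) - 1)) = -(s - (2 * a + 1)) / 4 := by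
    have heq : (2 * (a : ℝ) + 2) * (2 * s - (2 * a + 1)) =
        -4 * ((s - 1 / 2 - a) * (-(a : ℝ) - 1)) := by ring
    have h : (s - 1 / 2 - a) * (-(a : ℝ) - 1) ≠ 0 := fun h => by
      rw [h, mul_zero] at heq
      exact mul_ne_zero (by positivity) hsa heq
    rw [heq]
    generalize (s - 1 / 2 - a) * (-(a : ℝ) - 1) = E at *
    field_simp
  trans (X₁ * X₂ * (Y₁ * Y₂)) / (D₁ * D₂ * (D₃ * D₄)) * t * u *
      ((4 * (n : ℝ) + 1) * (-(s - 2 * b)) / (((b : ℝ) - s + n) * (1 / 2 + b + n)) +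
      (4 * (n : ℝ) + 3) * (-(s - (2 * a + 1))) * ((s + 1 / 2 - b + n) * (-(b : ℝ) + n)) /
        (((a : ℝ) + 1 - s + n) * (3 / 2 + a + n) * (((b : ℝ) - s + n) * (1 / 2 + b + n))))
  · refine Eq.trans ?_ (mul_add _ _ _).symm
    congr 1
    · rw [show (4 * (n : ℝ) + 1) * (-(s - 2 * b)) = 4 * r₁ ^ 2 * (-(s - 2 * b) / 4) by
        rw [hsq₁]; ring, ← hcoefB]
      generalize (s - 2 * b) / ((2 * b + 1) * (2 * s - 2 * b)) = c
      generalize (b : ℝ) - s + n = B at *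
      generalize 1 / 2 + (b : ℝ) + n = B' at *
      generalize (b : ℝ) - s = E at *
      generalize 1 / 2 + (b : ℝ) = E' at *
      field_simp
      ring
    · rw [show (4 * (n : ℝ) + 3) * (-(s - (2 * a + 1))) =
        4 * r₃ ^ 2 * (-(s - (2 * a + 1)) / 4) by rw [hsq₃]; ring, ← hcoefA]
      generalize (s - (2 * a + 1)) / ((2 * a + 2) * (2 * s - (2 * a + 1))) = c
      generalize (a : ℝ) + 1 - s + n = A at *
      generalize 3 / 2 + (a : ℝ) + n = A' at *
      generalize (b : ℝ) - s + n = B at *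
      generalize 1 / 2 + (b : ℝ) + n = B' at *
      generalize s - 1 / 2 - a = F
      generalize -(a : ℝ) - 1 = F'
      generalize s + 1 / 2 - b + n = H
      generalize -(b : ℝ) + n = H'
      simp only [div_eq_mul_inv, mul_inv]
      ring
  · rw [telescoping_certificate han han' hbn hbn']
    simp only [div_eq_mul_inv, mul_inv]
    ring

theorem Finset.sum_range_two_mul {M : Type*} [AddCommMonoid M] (f : ℕ → M) (N : ℕ) :
    ∑ i ∈ Finset.range (2 * N), f i = ∑ n ∈ Finset.range N, (f (2 * n) + f (2 * n + 1)) := by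
  induction N with
  | zero => simp
  | succ N ih =>
    rw [Nat.mul_succ, Finset.sum_range_succ, Finset.sum_range_succ, ih,
      Finset.sum_range_succ, add_assoc]

theorem sum_Icc_nu_mul_nu (s : ℝ) {j k M N : ℕ} (hM : min j k ≤ M) (hMN : M ≤ 2 * N) :
    ∑ i ∈ Finset.Icc 1 M, nu s i j * nu s i k =
      ∑ n ∈ Finset.range N, (nu s (2 * n + 1) j * nu s (2 * n + 1) k +
        nu s (2 * (n + 1)) j * nu s (2 * (n + 1)) k) := by
  have hsub : Finset.Icc 1 M ⊆ Finset.Icc 1 (2 * N) := Finset.Icc_subset_Icc_right hMN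
  rw [Finset.sum_subset hsub fun i hi hi' => ?_]
  · rw [← Finset.Ico_add_one_right_eq_Icc, Finset.sum_Ico_eq_sum_range, Nat.add_sub_cancel,
      Finset.sum_range_two_mul]
    refine Finset.sum_congr rfl fun n _ => ?_
    rw [show 1 + 2 * n = 2 * n + 1 by ring, show 1 + (2 * n + 1) = 2 * (n + 1) by ring]
  · simp only [Finset.mem_Icc] at hi hi'
    rcases min_le_iff.mp hM with h | h
    · rw [nu_eq_zero_of_lt s (by omega), zero_mul]
    · rw [nu_eq_zero_of_lt s (i := i) (j := k) (by omega), mul_zero]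

theorem nu_sum_identity_odd_even (s : ℝ) (hs : ∀ m : ℤ, 2 * s ≠ (m : ℝ)) (a b : ℕ) :
    (∑ i ∈ Finset.Icc 1 (max (2 * a + 1) (2 * b) + 1),
        nu s i (2 * a + 1) * nu s i (2 * b + 1)) +
      (∑ i ∈ Finset.Icc 1 (max (2 * a + 1) (2 * b) + 1),
        nu s i (2 * a + 1 + 1) * nu s i (2 * b)) =
      2 * theta s (2 * a + 1) * theta s (2 * b) := by
  have hN : max (2 * a + 1) (2 * b) + 1 ≤ 2 * (a + b + 1) := by omega
  rw [sum_Icc_nu_mul_nu s (by omega) hN, sum_Icc_nu_mul_nu s (by omega) hN,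
    ← Finset.sum_add_distrib]
  have hterm : ∀ n : ℕ,
      (nu s (2 * n + 1) (2 * a + 1) * nu s (2 * n + 1) (2 * b + 1) +
        nu s (2 * (n + 1)) (2 * a + 1) * nu s (2 * (n + 1)) (2 * b + 1)) +
      (nu s (2 * n + 1) (2 * a + 1 + 1) * nu s (2 * n + 1) (2 * b) +
        nu s (2 * (n + 1)) (2 * a + 1 + 1) * nu s (2 * (n + 1)) (2 * b)) =
      2 * theta s (2 * a + 1) * theta s (2 * b) *
        (telescopingTerm s a b n - telescopingTerm s a b (n + 1)) := fun n => by
    rw [nu_eq_zero_of_mod_ne s (i := 2 * (n + 1)) (j := 2 * a + 1) (by omega),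
      nu_eq_zero_of_mod_ne s (i := 2 * n + 1) (j := 2 * b) (by omega),
      show 2 * a + 1 + 1 = 2 * (a + 1) by ring, nu_odd_odd, nu_odd_odd, nu_even_even,
      nu_even_even, ← nuOdd_mul_add_nuEven_mul s hs]
    ring
  have hfirst : telescopingTerm s a b 0 = 1 := by simp [telescopingTerm, risingFactorial]
  have hlast : telescopingTerm s a b (a + b + 1) = 0 := by
    simp [telescopingTerm,
      risingFactorial_neg_natCast_eq_zero (show a < a + b + 1 by omega)]
  rw [Finset.sum_congr rfl fun n _ => hterm n, ← Finset.mul_sum, Finset.sum_range_sub',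
    hfirst, hlast, sub_zero, mul_one]

/-- Lemma 5.8: for `p ≡ q+1 (mod 2)`,
`∑_i ν_{i,p} ν_{i,q+1} + ∑_i ν_{i,p+1} ν_{i,q} = 2 θ_p θ_q`. -/
theorem nu_sum_identity (s : ℝ) (hs : ∀ m : ℤ, 2 * s ≠ (m : ℝ))
    (p q : ℕ) (hp : 0 < p) (hq : 0 < q) (hpq : p % 2 ≠ q % 2) :
    (∑ i ∈ Finset.Icc 1 (max p q + 1), nu s i p * nu s i (q + 1)) +
      (∑ i ∈ Finset.Icc 1 (max p q + 1), nu s i (p + 1) * nu s i q) =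
      2 * theta s p * theta s q := by
  rcases Nat.even_or_odd' p with ⟨b, rfl | rfl⟩
  · obtain ⟨a, rfl⟩ : ∃ a, q = 2 * a + 1 := ⟨q / 2, by omega⟩
    have h := nu_sum_identity_odd_even s hs a b
    rw [add_comm, max_comm, mul_right_comm]
    simpa only [mul_comm (nu s _ (2 * a + 1)), mul_comm (nu s _ (2 * a + 1 + 1))] using h
  · obtain ⟨a, rfl⟩ : ∃ a, q = 2 * a := ⟨q / 2, by omega⟩
    exact nu_sum_identity_odd_even s hs b a
end

section
/- For any positive integer s, define θ_i = s!(2s-i)!/((2s)! i!(s-i)!) for 0 ≤ i ≤ s and θ_i = 0 for i > s. Define the s×s symmetric matrix Υ = (γ_{ij})_{i,j=0}^{s-1} with γ_{ij} = ((-1)^i + (-1)^j) ∑_{ℓ=max(0,i+j+1-s)}^{min(i,j)} (-1)^{ℓ+1} θ_ℓ θ_{i+j+1-ℓ}. Then Υ = -U^T D̂ U, where D̂ = diag(d̂_0, ..., d̂_{s-1}) with d̂_k = (k!)²/((2k)!(2k+1)!), and U = (μ_{ij})_{i,j=0}^{s-1} is upper triangular with μ_{ij} = [s!/(2s)!] ·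 [(2i+1)!/(i!(i+j+1)!)] · [(2s+i-j)!/(s-1-j)!] · [(s-1-(i+j)/2)!((i+j)/2)! / ((s-(j-i)/2)!((j-i)/2)!)] when i ≤ j and i ≡ j (mod 2), and μ_{ij} = 0 otherwise. In particular Υ is negative definite. -/
/-- The Padé numerator coefficients `θ_i = s!(2s-i)!/((2s)! i!(s-i)!)` for `i ≤ s`, `0` otherwise. -/
noncomputable def padeTheta (s : ℕ) (i : ℕ) : ℝ :=
  if i ≤ s then
    ((Nat.factorial s : ℝ) * (Nat.factorial (2 * s - i) : ℝ)) /
      ((Nat.factorial (2 * s) : ℝ) * (Nat.factorial i : ℝ) * (Nat.factorial (s - i) : ℝ))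
  else 0

/-- The matrix `Υ` of the `(s,s)` diagonal Padé approximation. -/
noncomputable def padeUpsilon (s : ℕ) : Matrix (Fin s) (Fin s) ℝ :=
  Matrix.of fun i j =>
    ((-1 : ℝ) ^ i.val + (-1 : ℝ) ^ j.val) *
      ∑ ℓ ∈ Finset.Icc (i.val + j.val + 1 - s) (min i.val j.val),
        (-1 : ℝ) ^ (ℓ + 1) * padeTheta s ℓ * padeTheta s (i.val + j.val + 1 - ℓ)

/-- The diagonal matrix `D̂` with `d̂_k = (k!)²/((2k)!(2k+1)!)`. -/
noncomputable def padeD (s : ℕ) : Matrix (Fin s) (Fin s) ℝ :=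
  Matrix.diagonal fun k =>
    (Nat.factorial k.val : ℝ) ^ 2 /
      ((Nat.factorial (2 * k.val) : ℝ) * (Nat.factorial (2 * k.val + 1) : ℝ))

/-- The upper triangular matrix `U` with entries `μ_{ij}`. -/
noncomputable def padeU (s : ℕ) : Matrix (Fin s) (Fin s) ℝ :=
  Matrix.of fun i j =>
    if i.val ≤ j.val ∧ i.val % 2 = j.val % 2 then
      ((Nat.factorial s : ℝ) / (Nat.factorial (2 * s) : ℝ)) *
        ((Nat.factorial (2 * i.val + 1) : ℝ) /
          ((Nat.factorial i.val : ℝ) * (Nat.factorial (i.val + j.val + 1) : ℝ))) *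
        ((Nat.factorial (2 * s + i.val - j.val) : ℝ) / (Nat.factorial (s - 1 - j.val) : ℝ)) *
        ((Nat.factorial (s - 1 - (i.val + j.val) / 2) : ℝ) *
            (Nat.factorial ((i.val + j.val) / 2) : ℝ) /
          ((Nat.factorial (s - (j.val - i.val) / 2) : ℝ) *
            (Nat.factorial ((j.val - i.val) / 2) : ℝ)))
    else 0


open Finset

/-- The entries `μ_{k,k+2m}` of `U`, parametrized by the row `k` and half the distance `m` to the
diagonal. -/
noncomputable def padeMuShift (s k m : ℕ) : ℝ :=
  ((s.factorial : ℝ) / ((2 * s).factorial : ℝ)) *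
    (((2 * k + 1).factorial : ℝ) / ((k.factorial : ℝ) * ((2 * k + 2 * m + 1).factorial : ℝ))) *
    (((2 * s - 2 * m).factorial : ℝ) / ((s - 1 - (k + 2 * m)).factorial : ℝ)) *
    (((s - 1 - (k + m)).factorial : ℝ) * ((k + m).factorial : ℝ) /
      (((s - m).factorial : ℝ) * (m.factorial : ℝ)))

/-- The entries `μ_{kj}` of `U`, extended by zero to all natural indices. -/
noncomputable def padeMu (s k j : ℕ) : ℝ :=
  if k ≤ j ∧ k % 2 = j % 2 ∧ j < s then padeMuShift s k ((j - k) / 2) else 0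

theorem padeU_apply (s : ℕ) (i j : Fin s) : padeU s i j = padeMu s i j := by
  rcases i with ⟨i, hi⟩
  rcases j with ⟨j, hj⟩
  by_cases h : i ≤ j ∧ i % 2 = j % 2
  · obtain ⟨m, rfl⟩ : ∃ m, j = i + 2 * m := ⟨(j - i) / 2, by omega⟩
    simp only [padeU, padeMu, padeMuShift, Matrix.of_apply, h, hj, if_true, and_self]
    rw [show (i + 2 * m - i) / 2 = m by omega, show (i + (i + 2 * m)) / 2 = i + m by omega,
      show 2 * s + i - (i + 2 * m) = 2 * s - 2 * m by omega,
      show i + (i + 2 * m) + 1 = 2 * i + 2 * m + 1 by omega]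
  · have h' : ¬ (i ≤ j ∧ i % 2 = j % 2 ∧ j < s) := fun h₁ => h ⟨h₁.1, h₁.2.1⟩
    simp [padeU, padeMu, h, h']

theorem padeMu_add_two_mul {s k m : ℕ} (h : k + 2 * m < s) :
    padeMu s k (k + 2 * m) = padeMuShift s k m := by
  rw [padeMu, if_pos (by omega), show (k + 2 * m - k) / 2 = m by omega]

theorem padeMu_eq_zero_of_lt {s k j : ℕ} (h : j < k) : padeMu s k j = 0 :=
  if_neg (by omega)

theorem padeMu_eq_zero_of_le {s k j : ℕ} (h : s ≤ j) : padeMu s k j = 0 :=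
  if_neg (by omega)

theorem padeMu_eq_zero_of_parity {s k j : ℕ} (h : k % 2 ≠ j % 2) : padeMu s k j = 0 :=
  if_neg (by omega)

theorem padeMuShift_zero (s k : ℕ) : padeMuShift s k 0 = 1 := by
  simp only [padeMuShift, mul_zero, add_zero, Nat.sub_zero, Nat.factorial_zero, Nat.cast_one]
  field_simp

theorem padeMu_self {s k : ℕ} (h : k < s) : padeMu s k k = 1 := by
  simpa [padeMuShift_zero] using padeMu_add_two_mul (m := 0) (show k + 2 * 0 < s by omega)

theorem padeMuShift_recurrence {s k m : ℕ} (h : k + 2 * m + 3 < s) :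
    padeMuShift s k (m + 1) =
      padeMuShift s (k + 1) (m + 1) +
        1 / (4 * (2 * (k : ℝ) + 3) * (2 * k + 5)) * padeMuShift s (k + 2) m := by
  obtain ⟨r, rfl⟩ := Nat.exists_eq_add_of_lt h
  simp only [padeMuShift]
  rw [show k + 2 * m + 3 + r + 1 - 1 - (k + 2 * (m + 1)) = r + 1 by omega,
    show k + 2 * m + 3 + r + 1 - 1 - (k + 1 + 2 * (m + 1)) = r by omega,
    show k + 2 * m + 3 + r + 1 - 1 - (k + 2 + 2 * m) = r + 1 by omega,
    show 2 * (k + 2 * m + 3 + r + 1) - 2 * m = 2 * k + 2 * m + 2 * r + 6 + 2 by omega,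
    show 2 * (k + 2 * m + 3 + r + 1) - 2 * (m + 1) = 2 * k + 2 * m + 2 * r + 6 by omega,
    show k + 2 * m + 3 + r + 1 - 1 - (k + (m + 1)) = m + r + 2 by omega,
    show k + 2 * m + 3 + r + 1 - 1 - (k + 1 + (m + 1)) = m + r + 1 by omega,
    show k + 2 * m + 3 + r + 1 - 1 - (k + 2 + m) = m + r + 1 by omega,
    show k + 2 * m + 3 + r + 1 - m = k + m + r + 4 by omega,
    show k + 2 * m + 3 + r + 1 - (m + 1) = k + m + r + 3 by omega,
    show 2 * k + 2 * (m + 1) + 1 = 2 * k + 2 * m + 3 by omega,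
    show 2 * (k + 1) + 2 * (m + 1) + 1 = 2 * k + 2 * m + 3 + 2 by omega,
    show 2 * (k + 2) + 2 * m + 1 = 2 * k + 2 * m + 3 + 2 by omega,
    show k + (m + 1) = k + m + 1 by omega,
    show k + 1 + (m + 1) = k + m + 1 + 1 by omega,
    show k + 2 + m = k + m + 1 + 1 by omega,
    show 2 * (k + 2) + 1 = 2 * k + 1 + 4 by omega,
    show 2 * (k + 1) + 1 = 2 * k + 1 + 2 by omega]
  generalize (((k + 2 * m + 3 + r + 1).factorial : ℝ) /
    ((2 * (k + 2 * m + 3 + r + 1)).factorial : ℝ)) = c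
  simp only [Nat.factorial_succ, Nat.cast_mul, Nat.cast_add, Nat.cast_one, Nat.cast_ofNat]
  field_simp
  ring

theorem padeMuShift_boundary (k m : ℕ) :
    padeMuShift (k + 2 * m + 3) k (m + 1) =
      1 / (4 * (2 * (k : ℝ) + 3) * (2 * k + 5)) * padeMuShift (k + 2 * m + 3) (k + 2) m := by
  simp only [padeMuShift]
  rw [show k + 2 * m + 3 - 1 - (k + 2 * (m + 1)) = 0 by omega,
    show k + 2 * m + 3 - 1 - (k + 2 + 2 * m) = 0 by omega,
    show 2 * (k + 2 * m + 3) - 2 * m = 2 * k + 2 * m + 4 + 2 by omega,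
    show 2 * (k + 2 * m + 3) - 2 * (m + 1) = 2 * k + 2 * m + 4 by omega,
    show k + 2 * m + 3 - 1 - (k + (m + 1)) = m + 1 by omega,
    show k + 2 * m + 3 - 1 - (k + 2 + m) = m by omega,
    show k + 2 * m + 3 - m = k + m + 2 + 1 by omega,
    show k + 2 * m + 3 - (m + 1) = k + m + 2 by omega,
    show 2 * k + 2 * (m + 1) + 1 = 2 * k + 2 * m + 3 by omega,
    show 2 * (k + 2) + 2 * m + 1 = 2 * k + 2 * m + 3 + 2 by omega,
    show k + (m + 1) = k + m + 1 by omega,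
    show k + 2 + m = k + m + 1 + 1 by omega,
    show 2 * (k + 2) + 1 = 2 * k + 1 + 4 by omega]
  generalize (((k + 2 * m + 3).factorial : ℝ) / ((2 * (k + 2 * m + 3)).factorial : ℝ)) = c
  simp only [Nat.factorial_succ, Nat.cast_mul, Nat.cast_add, Nat.cast_one, Nat.cast_ofNat]
  field_simp
  ring

theorem padeTheta_eq_zero {s i : ℕ} (h : s < i) : padeTheta s i = 0 :=
  if_neg (by omega)

theorem padeMuShift_zero_left {s m : ℕ} (h : 2 * m < s) :
    padeMuShift s 0 m = 2 * padeTheta s (2 * m + 1) := by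
  obtain ⟨r, rfl⟩ := Nat.exists_eq_add_of_lt h
  rw [padeMuShift, padeTheta, if_pos (by omega),
    show 2 * m + r + 1 - 1 - (0 + 2 * m) = r by omega,
    show 2 * (2 * m + r + 1) - 2 * m = 2 * m + 2 * r + 1 + 1 by omega,
    show 2 * (2 * m + r + 1) - (2 * m + 1) = 2 * m + 2 * r + 1 by omega,
    show 2 * m + r + 1 - 1 - (0 + m) = m + r by omega,
    show 2 * m + r + 1 - m = m + r + 1 by omega,
    show 2 * m + r + 1 - (2 * m + 1) = r by omega,
    show 2 * 0 + 2 * m + 1 = 2 * m + 1 by omega]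
  generalize ((2 * (2 * m + r + 1)).factorial) = c
  generalize ((2 * m + r + 1).factorial) = c'
  simp only [Nat.factorial_succ, Nat.factorial_zero, zero_add, mul_zero, Nat.cast_mul,
    Nat.cast_add, Nat.cast_one, Nat.cast_ofNat]
  field_simp
  ring

theorem padeTheta_even_recurrence {s m : ℕ} (h : 2 * m + 2 < s) :
    padeTheta s (2 * m + 2) = padeMuShift s 0 (m + 1) + 1 / 12 * padeMuShift s 1 m := by
  obtain ⟨r, rfl⟩ := Nat.exists_eq_add_of_lt h
  rw [padeMuShift, padeMuShift, padeTheta, if_pos (by omega),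
    show 2 * m + 2 + r + 1 - 1 - (0 + 2 * (m + 1)) = r by omega,
    show 2 * m + 2 + r + 1 - 1 - (1 + 2 * m) = r + 1 by omega,
    show 2 * (2 * m + 2 + r + 1) - 2 * m = 2 * m + 2 * r + 4 + 2 by omega,
    show 2 * (2 * m + 2 + r + 1) - 2 * (m + 1) = 2 * m + 2 * r + 4 by omega,
    show 2 * (2 * m + 2 + r + 1) - (2 * m + 2) = 2 * m + 2 * r + 4 by omega,
    show 2 * m + 2 + r + 1 - 1 - (0 + (m + 1)) = m + r + 1 by omega,
    show 2 * m + 2 + r + 1 - 1 - (1 + m) = m + r + 1 by omega,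
    show 2 * m + 2 + r + 1 - m = m + r + 2 + 1 by omega,
    show 2 * m + 2 + r + 1 - (m + 1) = m + r + 2 by omega,
    show 2 * m + 2 + r + 1 - (2 * m + 2) = r + 1 by omega,
    show 2 * 0 + 2 * (m + 1) + 1 = 2 * m + 2 + 1 by omega,
    show 2 * 1 + 2 * m + 1 = 2 * m + 2 + 1 by omega,
    show 1 + m = m + 1 by omega]
  generalize ((2 * (2 * m + 2 + r + 1)).factorial) = c
  generalize ((2 * m + 2 + r + 1).factorial) = c'
  simp only [Nat.factorial_succ, Nat.factorial_zero, zero_add, mul_zero, mul_one, Nat.cast_mul,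
    Nat.cast_add, Nat.cast_one, Nat.cast_ofNat]
  field_simp
  ring

theorem padeTheta_even_boundary (m : ℕ) :
    padeTheta (2 * m + 2) (2 * m + 2) = 1 / 12 * padeMuShift (2 * m + 2) 1 m := by
  rw [padeMuShift, padeTheta, if_pos le_rfl,
    show 2 * m + 2 - 1 - (1 + 2 * m) = 0 by omega,
    show 2 * (2 * m + 2) - 2 * m = 2 * m + 2 + 2 by omega,
    show 2 * (2 * m + 2) - (2 * m + 2) = 2 * m + 2 by omega,
    show 2 * m + 2 - 1 - (1 + m) = m by omega,
    show 2 * m + 2 - m = m + 2 by omega,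
    show 2 * m + 2 - (2 * m + 2) = 0 by omega,
    show 2 * 1 + 2 * m + 1 = 2 * m + 2 + 1 by omega,
    show 1 + m = m + 1 by omega]
  generalize ((2 * (2 * m + 2)).factorial) = c
  simp only [Nat.factorial_succ, Nat.factorial_zero, zero_add, mul_one, Nat.cast_mul,
    Nat.cast_add, Nat.cast_one, Nat.cast_ofNat]
  field_simp
  ring

theorem padeTheta_zero (s : ℕ) : padeTheta s 0 = 1 := by
  simp only [padeTheta, Nat.zero_le, if_true, Nat.sub_zero, Nat.factorial_zero, Nat.cast_one]
  field_simp

/-- Coefficients of the remainders in the Euclidean algorithm for the even and odd parts of the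
Padé numerator `∑ θ_i x^i`: the even part itself, followed by `x` times the rows of `U`. -/
noncomputable def padeRemainder (s : ℕ) : ℕ → ℕ → ℝ
  | 0, p => if p % 2 = 0 then padeTheta s p else 0
  | _ + 1, 0 => 0
  | k + 1, p + 1 => padeMu s k p

theorem padeRemainder_recurrence {s k : ℕ} (hk : k < s) (p : ℕ) :
    padeRemainder s k p =
      padeMu s k p + 1 / (4 * (2 * (k : ℝ) + 1) * (2 * k + 3)) * padeRemainder s (k + 2) p := by
  rcases k with _ | k
  · rcases p with _ | p
    · simp [padeRemainder, padeMu_self hk, padeTheta_zero]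
    · simp only [padeRemainder]
      split_ifs with hp
      · obtain ⟨m, rfl⟩ : ∃ m, p = 1 + 2 * m := ⟨p / 2, by omega⟩
        rw [show 1 + 2 * m + 1 = 2 * m + 2 by omega]
        rcases lt_trichotomy (2 * m + 2) s with h | rfl | h
        · rw [padeTheta_even_recurrence h, padeMu_add_two_mul (by omega)]
          have := padeMu_add_two_mul (s := s) (k := 0) (m := m + 1) (by omega)
          rw [show 0 + 2 * (m + 1) = 2 * m + 2 by omega] at this
          rw [this]
          norm_num
        · rw [padeTheta_even_boundary, padeMu_add_two_mul (by omega),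
            padeMu_eq_zero_of_le le_rfl]
          norm_num
        · rw [padeTheta_eq_zero h, padeMu_eq_zero_of_le (by omega),
            padeMu_eq_zero_of_le (by omega)]
          simp
      · rw [padeMu_eq_zero_of_parity (by omega), padeMu_eq_zero_of_parity (by omega)]
        simp
  · rcases p with _ | p
    · simp [padeRemainder, padeMu_eq_zero_of_lt]
    · simp only [padeRemainder]
      by_cases hpar : k % 2 = p % 2
      · rcases lt_trichotomy p k with h | rfl | h
        · simp [padeMu_eq_zero_of_lt, h, show p < k + 2 by omega]
        · simp [padeMu_self hk, padeMu_self (show p < s by omega), padeMu_eq_zero_of_lt]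
        · obtain ⟨m, rfl⟩ : ∃ m, p = k + 2 * (m + 1) := ⟨(p - k) / 2 - 1, by omega⟩
          rcases lt_trichotomy (k + 2 * m + 3) s with h' | rfl | h'
          · rw [padeMu_add_two_mul (by omega), padeMuShift_recurrence h',
              show k + 2 * (m + 1) + 1 = k + 1 + 2 * (m + 1) by omega,
              padeMu_add_two_mul (by omega),
              show k + 2 * (m + 1) = k + 1 + 1 + 2 * m by omega, padeMu_add_two_mul (by omega)]
            push_cast
            ring_nf
          · rw [padeMu_add_two_mul (by omega), padeMuShift_boundary,
              padeMu_eq_zero_of_le (by omega),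
              show k + 2 * (m + 1) = k + 1 + 1 + 2 * m by omega, padeMu_add_two_mul (by omega)]
            push_cast
            ring_nf
          · simp [padeMu_eq_zero_of_le, show s ≤ k + 2 * (m + 1) by omega,
              show s ≤ k + 2 * (m + 1) + 1 by omega]
      · rw [padeMu_eq_zero_of_parity hpar, padeMu_eq_zero_of_parity (by omega),
          padeMu_eq_zero_of_parity (by omega)]
        simp

theorem padeRemainder_one (s p : ℕ) :
    padeRemainder s 1 p = if p % 2 = 1 then 2 * padeTheta s p else 0 := by
  rcases p with _ | p
  · simp [padeRemainder]
  · simp only [padeRemainder]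
    split_ifs with hp
    · obtain ⟨m, rfl⟩ : ∃ m, p = 2 * m := ⟨p / 2, by omega⟩
      rcases lt_or_ge (2 * m) s with h | h
      · rw [← padeMuShift_zero_left h]
        simpa using padeMu_add_two_mul (s := s) (k := 0) (m := m) (by omega)
      · rw [padeMu_eq_zero_of_le h, padeTheta_eq_zero (by omega), mul_zero]
    · exact padeMu_eq_zero_of_parity (by omega)

/-- The diagonal entries `d̂_k`. -/
noncomputable def padeDiag (k : ℕ) : ℝ :=
  (k.factorial : ℝ) ^ 2 / (((2 * k).factorial : ℝ) * ((2 * k + 1).factorial : ℝ))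

theorem padeDiag_pos (k : ℕ) : 0 < padeDiag k := by
  unfold padeDiag
  positivity

theorem padeDiag_succ (k : ℕ) :
    padeDiag (k + 1) = padeDiag k * (1 / (4 * (2 * (k : ℝ) + 1) * (2 * k + 3))) := by
  simp only [padeDiag, show 2 * (k + 1) = 2 * k + 1 + 1 by omega, Nat.factorial_succ,
    Nat.cast_mul, Nat.cast_add, Nat.cast_one, Nat.cast_ofNat]
  field_simp
  ring

/-- Coefficients of `V_k(x) V_{k+1}(y) + V_{k+1}(x) V_k(y)` for the remainders `V_k`. -/
noncomputable def padeWronskian (s k p q : ℕ) : ℝ :=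
  padeRemainder s k p * padeRemainder s (k + 1) q +
    padeRemainder s (k + 1) p * padeRemainder s k q

theorem padeWronskian_telescope (s p q n : ℕ) (hn : n ≤ s) :
    ∑ k ∈ range n, padeDiag k *
        (padeMu s k p * padeRemainder s (k + 1) q + padeRemainder s (k + 1) p * padeMu s k q) +
      padeDiag n * padeWronskian s n p q = padeWronskian s 0 p q := by
  induction n with
  | zero => simp [padeDiag]
  | succ n ih =>
    rw [← ih (by omega), sum_range_succ, padeDiag_succ, padeWronskian, padeWronskian,
      padeRemainder_recurrence (show n < s by omega) p,
      padeRemainder_recurrence (show n < s by omega) q]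
    ring

theorem padeRemainder_succ_self (s p : ℕ) : padeRemainder s (s + 1) p = 0 := by
  rcases p with _ | p
  · rfl
  · exact if_neg (by omega)

theorem padeWronskian_zero (s p q : ℕ) :
    padeWronskian s 0 p q = (1 - (-1) ^ (p + q)) * (padeTheta s p * padeTheta s q) := by
  rw [padeWronskian, padeRemainder_one, padeRemainder_one, pow_add]
  simp only [padeRemainder]
  rcases Nat.even_or_odd p with hp | hp <;> rcases Nat.even_or_odd q with hq | hq <;>
    simp only [hp.neg_one_pow, hq.neg_one_pow] <;>
    simp only [Nat.even_iff, Nat.odd_iff] at hp hq <;> simp [hp, hq] <;> ring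

/-- The Christoffel–Darboux type identity for the remainders. -/
theorem sum_padeDiag_padeRemainder (s p q : ℕ) :
    ∑ k ∈ range s, padeDiag k *
        (padeMu s k p * padeRemainder s (k + 1) q + padeRemainder s (k + 1) p * padeMu s k q) =
      (1 - (-1) ^ (p + q)) * (padeTheta s p * padeTheta s q) := by
  rw [← padeWronskian_zero, ← padeWronskian_telescope s p q s le_rfl]
  simp [padeWronskian, padeRemainder_succ_self]

theorem sum_padeDiag_padeMu (s p q : ℕ) :
    ∑ k ∈ range s, padeDiag k * (padeMu s k p * padeMu s k q) =
      ((-1) ^ p + (-1) ^ q) *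
        ∑ l ∈ range (q + 1), (-1) ^ l * (padeTheta s l * padeTheta s (p + q + 1 - l)) := by
  induction q generalizing p with
  | zero =>
    have h := sum_padeDiag_padeRemainder s (p + 1) 0
    simp only [padeRemainder, mul_zero, zero_add] at h
    rw [h]
    simp
    ring
  | succ q ih =>
    have h := sum_padeDiag_padeRemainder s (p + 1) (q + 1)
    simp only [padeRemainder, mul_add, sum_add_distrib] at h
    rw [ih] at h
    rw [eq_sub_of_add_eq' h, sum_range_succ _ (q + 1),
      show p + (q + 1) + 1 - (q + 1) = p + 1 by omega,
      show p + (q + 1) + 1 = p + 1 + q + 1 by omega]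
    have hsq : ((-1 : ℝ) ^ q) ^ 2 = 1 := by rw [← pow_mul, mul_comm, pow_mul]; simp
    simp only [pow_add, pow_one]
    linear_combination (-padeTheta s (p + 1) * padeTheta s (q + 1)) * hsq

theorem padeUpsilon_apply_of_le {s : ℕ} {i j : Fin s} (h : j ≤ i) :
    padeUpsilon s i j =
      -(((-1) ^ i.val + (-1) ^ j.val) * ∑ l ∈ range (j.val + 1),
        (-1) ^ l * (padeTheta s l * padeTheta s (i.val + j.val + 1 - l))) := by
  rw [padeUpsilon, Matrix.of_apply, min_eq_right (by exact_mod_cast h), ← mul_neg,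
    ← sum_neg_distrib]
  congr 1
  rw [← sum_subset (s₁ := Icc (i.val + j.val + 1 - s) j.val) (s₂ := range (j.val + 1))]
  · refine sum_congr rfl fun l _ => ?_
    ring
  · intro l hl
    simp only [mem_Icc, mem_range] at hl ⊢
    omega
  · intro l hl hl'
    simp only [mem_Icc, mem_range] at hl hl'
    rw [padeTheta_eq_zero (s := s) (i := i.val + j.val + 1 - l) (by omega)]
    ring

theorem padeUpsilon_symm (s : ℕ) (i j : Fin s) : padeUpsilon s i j = padeUpsilon s j i := by
  simp only [padeUpsilon, Matrix.of_apply, add_comm, min_comm]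

theorem padeUpsilon_apply (s : ℕ) (i j : Fin s) :
    padeUpsilon s i j = -∑ k ∈ range s, padeDiag k * (padeMu s k i * padeMu s k j) := by
  rcases le_total j i with h | h
  · rw [padeUpsilon_apply_of_le h, sum_padeDiag_padeMu]
  · rw [padeUpsilon_symm, padeUpsilon_apply_of_le h, ← sum_padeDiag_padeMu]
    simp only [mul_comm (padeMu s _ (j : ℕ))]

theorem padeU_det (s : ℕ) : (padeU s).det = 1 := by
  rw [Matrix.det_of_isUpperTriangular]
  · exact prod_eq_one fun i _ => by rw [padeU_apply, padeMu_self i.isLt]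
  · intro i j hij
    rw [padeU_apply]
    exact padeMu_eq_zero_of_lt hij

theorem padeUpsilon_eq (s : ℕ) :
    padeUpsilon s = -((padeU s).transpose * padeD s * padeU s) := by
  ext i j
  rw [padeUpsilon_apply, Matrix.neg_apply, Matrix.mul_apply, ← Fin.sum_univ_eq_sum_range
    (fun k => padeDiag k * (padeMu s k i * padeMu s k j))]
  congr 1
  refine sum_congr rfl fun k _ => ?_
  rw [padeD, Matrix.mul_diagonal, Matrix.transpose_apply, padeU_apply, padeU_apply, padeDiag]
  ring

/-- Theorem 5.1: the unified Cholesky type decomposition `Υ = -U^T D̂ U` of the `(s,s)`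
diagonal Padé matrix; in particular `Υ` is negative definite. -/
theorem pade_cholesky (s : ℕ) (hs : 0 < s) :
    padeUpsilon s = -((padeU s).transpose * padeD s * padeU s) ∧
      (-(padeUpsilon s)).PosDef := by
  refine ⟨padeUpsilon_eq s, ?_⟩
  rw [padeUpsilon_eq, neg_neg, ← Matrix.conjTranspose_eq_transpose_of_trivial]
  refine Matrix.PosDef.conjTranspose_mul_mul_same
    (Matrix.PosDef.diagonal fun k => padeDiag_pos k) ?_
  exact Matrix.mulVec_injective_of_isUnit
    ((Matrix.isUnit_iff_isUnit_det _).2 (by simp [padeU_det]))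
end

section
/- Let V be a real Hilbert space, L : V → V a bounded linear operator with ⟨Lv,v⟩ ≤ 0 for all v, and let s be a positive integer. Let P = ∑_{i=0}^s θ_i (τL)^i and Q = ∑_{i=0}^s (-1)^i θ_i (τL)^i with θ_i = s!(2s-i)!/((2s)! i!(s-i)!), and assume Q is invertible. Then the (s,s) diagonal Padé time-stepping u^{n+1} = Q^{-1}P u^n satisfies ‖u^{n+1}‖ ≤ ‖u^n‖ for every τ > 0. -/
open scoped RealInnerProductSpace

namespace PadeStability

open Polynomial

/-- Numerator and denominator of the continued fraction
`X / ((2k+1) + X² / ((2k+3) + X² / ⋯))` truncated after `n` steps. -/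
noncomputable def tanhFraction : ℕ → ℕ → ℝ[X] × ℝ[X]
  | 0, _ => (0, 1)
  | n + 1, k =>
    (X * (tanhFraction n (k + 1)).2,
      C (2 * (k : ℝ) + 1) * (tanhFraction n (k + 1)).2 + X * (tanhFraction n (k + 1)).1)

/-- Three-term recurrence obtained by extending the continued fraction at its far end. -/
theorem tanhFraction_recurrence (n k : ℕ) :
    (tanhFraction (n + 2) k).1 =
        C (2 * ((n : ℝ) + k) + 3) * (tanhFraction (n + 1) k).1 + X ^ 2 * (tanhFraction n k).1 ∧
      (tanhFraction (n + 2) k).2 =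
        C (2 * ((n : ℝ) + k) + 3) * (tanhFraction (n + 1) k).2 + X ^ 2 * (tanhFraction n k).2 := by
  induction n generalizing k with
  | zero =>
    simp only [tanhFraction]
    constructor <;> simp only [map_add, map_mul, Nat.cast_add, Nat.cast_one, map_one,
      Nat.cast_zero, map_zero, map_ofNat] <;> ring
  | succ n ih =>
    obtain ⟨h₁, h₂⟩ := ih (k + 1)
    have hc : (2 * (((n + 1 : ℕ) : ℝ) + k) + 3) = 2 * ((n : ℝ) + ((k + 1 : ℕ) : ℝ)) + 3 := by
      push_cast; ring
    rw [hc, tanhFraction, h₁, h₂, tanhFraction.eq_2 k (n + 1), tanhFraction.eq_2 k n]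
    constructor <;> ring

/-- Coefficients of the reverse Bessel polynomials. -/
noncomputable def besselCoeff (n i : ℕ) : ℝ :=
  if i ≤ n then
    ((2 * n - i).factorial : ℝ) * 2 ^ i / (2 ^ n * (i.factorial : ℝ) * ((n - i).factorial : ℝ))
  else 0

theorem besselCoeff_add (m i : ℕ) :
    besselCoeff (m + i) i =
      ((2 * m + i).factorial : ℝ) / (2 ^ m * (i.factorial : ℝ) * (m.factorial : ℝ)) := by
  have h₁ : 2 * (m + i) - i = 2 * m + i := by omega
  rw [besselCoeff, if_pos (Nat.le_add_left i m), h₁, Nat.add_sub_cancel, pow_add]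
  field_simp

theorem besselCoeff_of_lt {n i : ℕ} (h : n < i) : besselCoeff n i = 0 :=
  if_neg (not_le.mpr h)

theorem besselCoeff_zero_recurrence (n : ℕ) :
    besselCoeff (n + 1) 0 = (2 * (n : ℝ) + 1) * besselCoeff n 0 := by
  have h₁ := besselCoeff_add (n + 1) 0
  have h₀ := besselCoeff_add n 0
  simp only [add_zero] at h₁ h₀
  rw [h₁, h₀, show 2 * (n + 1) = 2 * n + 1 + 1 by ring]
  simp only [Nat.factorial_succ]
  push_cast
  field_simp
  ring

theorem besselCoeff_one_recurrence (n : ℕ) :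
    besselCoeff (n + 2) 1 = (2 * (n : ℝ) + 3) * besselCoeff (n + 1) 1 := by
  have h₁ := besselCoeff_add (n + 1) 1
  have h₀ := besselCoeff_add n 1
  rw [show n + 1 + 1 = n + 2 by ring] at h₁
  rw [h₁, h₀, show 2 * (n + 1) + 1 = 2 * n + 1 + 1 + 1 by ring]
  simp only [Nat.factorial_succ]
  push_cast
  field_simp
  ring

theorem besselCoeff_recurrence (n i : ℕ) :
    besselCoeff (n + 2) (i + 2) =
      (2 * (n : ℝ) + 3) * besselCoeff (n + 1) (i + 2) + besselCoeff n i := by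
  rcases lt_or_ge n i with h | h
  · rw [besselCoeff_of_lt (by omega), besselCoeff_of_lt (by omega), besselCoeff_of_lt h]
    simp
  obtain ⟨m, rfl⟩ := Nat.exists_eq_add_of_le' h
  rw [add_assoc, besselCoeff_add m (i + 2), besselCoeff_add m i]
  rcases m with _ | m
  · rw [besselCoeff_of_lt (by omega)]
    have h₁ : ((i + 2).factorial : ℝ) ≠ 0 := by positivity
    have h₂ : (i.factorial : ℝ) ≠ 0 := by positivity
    simp [h₁, h₂]
  · rw [show m + 1 + i + 1 = m + (i + 2) by ring, besselCoeff_add m (i + 2),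
      show 2 * (m + 1) + (i + 2) = 2 * m + i + 1 + 1 + 1 + 1 by ring,
      show 2 * (m + 1) + i = 2 * m + i + 1 + 1 by ring,
      show 2 * m + (i + 2) = 2 * m + i + 1 + 1 by ring]
    simp only [Nat.factorial_succ]
    push_cast
    field_simp
    ring

/-- The reverse Bessel polynomials. -/
noncomputable def bessel (n : ℕ) : ℝ[X] :=
  ∑ i ∈ Finset.range (n + 1), C (besselCoeff n i) * X ^ i

theorem coeff_bessel (n i : ℕ) : (bessel n).coeff i = besselCoeff n i := by
  simp only [bessel, finsetSum_coeff, coeff_C_mul_X_pow, Finset.sum_ite_eq, Finset.mem_range]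
  split_ifs with h
  · rfl
  · exact (besselCoeff_of_lt (by omega)).symm

theorem bessel_zero : bessel 0 = 1 := by
  simp [bessel, besselCoeff]

theorem bessel_one : bessel 1 = 1 + X := by
  simp [bessel, besselCoeff, Finset.sum_range_succ]

theorem bessel_recurrence (n : ℕ) :
    bessel (n + 2) = C (2 * (n : ℝ) + 3) * bessel (n + 1) + X ^ 2 * bessel n := by
  ext i
  rw [coeff_add, coeff_C_mul, mul_comm (X ^ 2), coeff_mul_X_pow']
  simp only [coeff_bessel]
  rcases i with _ | _ | i
  · rw [besselCoeff_zero_recurrence (n + 1)]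
    push_cast
    simp
    left
    ring
  · rw [zero_add, besselCoeff_one_recurrence n]
    simp
  · rw [besselCoeff_recurrence n i]
    simp

/-- The even and odd parts of the reverse Bessel polynomial are the denominator and numerator
of the continued fraction. -/
theorem tanhFraction_add_sub (n : ℕ) :
    (tanhFraction n 0).2 + (tanhFraction n 0).1 = bessel n ∧
      (tanhFraction n 0).2 - (tanhFraction n 0).1 = (bessel n).comp (-X) := by
  induction n using Nat.twoStepInduction with
  | zero => simp [tanhFraction, bessel_zero]
  | one => simp [tanhFraction, bessel_one, sub_eq_add_neg]
  | more n ih₀ ih₁ =>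
    obtain ⟨h₁, h₂⟩ := tanhFraction_recurrence n 0
    simp only [Nat.cast_zero, add_zero] at h₁ h₂
    rw [bessel_recurrence, h₁, h₂]
    constructor
    · rw [← ih₀.1, ← ih₁.1]
      ring
    · simp only [add_comp, mul_comp, C_comp, pow_comp, X_comp]
      rw [← ih₀.2, ← ih₁.2]
      ring

variable {V : Type*} [NormedAddCommGroup V] [InnerProductSpace ℝ V]

theorem inner_tanhFraction_nonpos (A : V →L[ℝ] V) (hA : ∀ v : V, ⟪A v, v⟫ ≤ 0) (n k : ℕ) (w : V) :
    ⟪aeval A (tanhFraction n k).1 w, aeval A (tanhFraction n k).2 w⟫ ≤ 0 := by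
  induction n generalizing k w with
  | zero => simp [tanhFraction]
  | succ n ih =>
    set N := (tanhFraction n (k + 1)).1 with hN
    set D := (tanhFraction n (k + 1)).2 with hD
    have hden : aeval A (tanhFraction (n + 1) k).2 w =
        (2 * (k : ℝ) + 1) • aeval A D w + aeval A N (A w) := by
      rw [tanhFraction, ← hN, ← hD, mul_comm X N, ← smul_eq_C_mul]
      simp only [map_add, map_mul, aeval_X, map_smul, add_apply,
        smul_apply, mul_apply_eq_comp]
    have hnum : aeval A (tanhFraction (n + 1) k).1 w = A (aeval A D w) := by
      rw [tanhFraction, ← hD, map_mul, aeval_X, mul_apply_eq_comp]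
    have hcomm : A (aeval A D w) = aeval A D (A w) := by
      have h : A * aeval A D = aeval A D * A := by
        simpa using congrArg (aeval A) (mul_comm X D)
      exact congrArg (fun T : V →L[ℝ] V => T w) h
    rw [hden, hnum, inner_add_right, inner_smul_right]
    have h₁ := mul_nonpos_of_nonneg_of_nonpos (by positivity : 0 ≤ 2 * (k : ℝ) + 1)
      (hA (aeval A D w))
    have h₂ := ih (k + 1) (A w)
    rw [← hN, ← hD, real_inner_comm, ← hcomm] at h₂
    linarith

theorem norm_aeval_bessel_le (A : V →L[ℝ] V) (hA : ∀ v : V, ⟪A v, v⟫ ≤ 0) (n : ℕ) (w : V) :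
    ‖aeval A (bessel n) w‖ ≤ ‖aeval A ((bessel n).comp (-X)) w‖ := by
  obtain ⟨hadd, hsub⟩ := tanhFraction_add_sub n
  have h := inner_tanhFraction_nonpos A hA n 0 w
  rw [real_inner_comm] at h
  rw [← hsub, ← hadd, map_add, map_sub, add_apply,
    sub_apply]
  refine le_of_sq_le_sq ?_ (norm_nonneg _)
  rw [norm_add_sq_real, norm_sub_sq_real]
  linarith

end PadeStability

/-- Unconditional strong stability of the `(s,s)` diagonal Padé time-stepping:
with `θ_i = s!(2s-i)!/((2s)! i!(s-i)!)`, `P = ∑_{i=0}^s θ_i (τL)^i`,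
`Q = ∑_{i=0}^s (-1)^i θ_i (τL)^i`, `Q` invertible, and `u^{n+1} = Q⁻¹ P u^n`,
one has `‖u^{n+1}‖ ≤ ‖u^n‖` for every `τ > 0`. -/
theorem pade_unconditional_strong_stability
    {V : Type*} [NormedAddCommGroup V] [InnerProductSpace ℝ V] [CompleteSpace V]
    (L : V →L[ℝ] V) (hL : ∀ v : V, ⟪L v, v⟫ ≤ 0)
    (s : ℕ) (hs : 0 < s) (τ : ℝ) (hτ : 0 < τ)
    (θ : ℕ → ℝ)
    (hθ : ∀ i ≤ s, θ i =
      ((Nat.factorial s : ℝ) * (Nat.factorial (2 * s - i) : ℝ)) /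
        ((Nat.factorial (2 * s) : ℝ) * (Nat.factorial i : ℝ) * (Nat.factorial (s - i) : ℝ)))
    (P Q : V →L[ℝ] V)
    (hP : P = ∑ i ∈ Finset.range (s + 1), θ i • (τ • L) ^ i)
    (hQ : Q = ∑ i ∈ Finset.range (s + 1), ((-1 : ℝ) ^ i * θ i) • (τ • L) ^ i)
    (hQinv : IsUnit Q)
    (u0 u1 w : V) (hw : Q w = u0) (hu1 : u1 = P w) :
    ‖u1‖ ≤ ‖u0‖ := by
  set A : V →L[ℝ] V := (τ / 2) • L with hA
  have hdiss : ∀ v : V, ⟪A v, v⟫ ≤ 0 := fun v => by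
    rw [hA, smul_apply, real_inner_smul_left]
    exact mul_nonpos_of_nonneg_of_nonpos (by positivity) (hL v)
  set c : ℝ := 2 ^ s * (s.factorial : ℝ) / ((2 * s).factorial : ℝ) with hc
  have hcoeff : ∀ i ∈ Finset.range (s + 1),
      θ i • (τ • L) ^ i = c • PadeStability.besselCoeff s i • A ^ i := fun i hi => by
    have hi : i ≤ s := by simpa [Nat.lt_succ_iff] using hi
    rw [hθ i hi, PadeStability.besselCoeff, if_pos hi, hA, hc, smul_pow, smul_pow, smul_smul,
      smul_smul, smul_smul, div_pow]
    congr 1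
    field_simp
  have hP' : P = c • Polynomial.aeval A (PadeStability.bessel s) := by
    rw [hP, Finset.sum_congr rfl hcoeff, ← Finset.smul_sum, PadeStability.bessel, map_sum]
    simp only [← Polynomial.smul_eq_C_mul, map_smul, map_pow, Polynomial.aeval_X]
  have hQ' : Q = c • Polynomial.aeval A ((PadeStability.bessel s).comp (-Polynomial.X)) := by
    rw [hQ, PadeStability.bessel, Polynomial.sum_comp, map_sum, Finset.smul_sum]
    refine Finset.sum_congr rfl fun i hi => ?_
    rw [mul_smul, hcoeff i hi, Polynomial.mul_comp, Polynomial.C_comp, Polynomial.X_pow_comp,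
      ← Polynomial.smul_eq_C_mul, map_smul, map_pow, map_neg, Polynomial.aeval_X,
      ← neg_one_smul ℝ A, smul_pow (-1 : ℝ) A, smul_comm _ c,
      smul_comm _ (PadeStability.besselCoeff s i)]
  rw [hu1, ← hw, hP', hQ', smul_apply, smul_apply,
    norm_smul, norm_smul]
  exact mul_le_mul_of_nonneg_left (PadeStability.norm_aeval_bessel_le A hdiss s w) (norm_nonneg c)
end
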